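/- The quantity ĥ(d) = ∫_{(arsinh d, (3/2)·log d]} d / √(sinh² x − d²) dx tends to π/2 as d → ∞. -/

import Mathlib

open MeasureTheory Filter Real

theorem hasDerivAt_neg_arcsin_div_sinh {d x : ℝ} (hd : 0 < d) (hx : d < sinh x) :
    HasDerivAt (fun y => -arcsin (d / sinh y))
      (d / √(sinh x ^ 2 - d ^ 2) * (cosh x / sinh x)) x := by
  have hs : 0 < sinh x := hd.trans hx
  have hlt : d / sinh x < 1 := (div_lt_one hs).2 hx
  have hpos : 0 < d / sinh x := div_pos hd hs
  have hquot : HasDerivAt (fun y => d / sinh y) (-(d * cosh x) / sinh x ^ 2) x := by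
    refine ((hasDerivAt_const x d).div (Real.hasDerivAt_sinh x) hs.ne').congr_deriv ?_
    ring
  refine ((Real.hasDerivAt_arcsin (by linarith) hlt.ne).comp x hquot).neg.congr_deriv ?_
  have hsqrt : √(1 - (d / sinh x) ^ 2) = √(sinh x ^ 2 - d ^ 2) / sinh x := by
    rw [show 1 - (d / sinh x) ^ 2 = (sinh x ^ 2 - d ^ 2) / sinh x ^ 2 by field_simp,
      Real.sqrt_div' _ (sq_nonneg _), Real.sqrt_sq hs.le]
  have hne : √(sinh x ^ 2 - d ^ 2) ≠ 0 := (Real.sqrt_pos.2 (by nlinarith)).ne'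
  rw [hsqrt]
  field_simp

theorem integrableOn_and_integral_mul_coth {d b : ℝ} (hd : 0 < d) (hb : d ≤ sinh b) :
    IntegrableOn (fun x => d / √(sinh x ^ 2 - d ^ 2) * (cosh x / sinh x))
        (Set.Ioc (arsinh d) b) ∧
      ∫ x in Set.Ioc (arsinh d) b, d / √(sinh x ^ 2 - d ^ 2) * (cosh x / sinh x) =
        π / 2 - arcsin (d / sinh b) := by
  have hab : arsinh d ≤ b := by rwa [← Real.sinh_le_sinh, Real.sinh_arsinh]
  have hsinh : ∀ x, arsinh d < x → d < sinh x := fun x hx => by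
    rwa [← Real.sinh_lt_sinh, Real.sinh_arsinh] at hx
  have hcont : ContinuousOn (fun y => -arcsin (d / sinh y)) (Set.Icc (arsinh d) b) := by
    refine (Real.continuous_arcsin.comp_continuousOn
      (continuousOn_const.div Real.continuous_sinh.continuousOn fun x hx => ?_)).neg
    have : d ≤ sinh x := by
      have := hx.1
      rwa [← Real.sinh_le_sinh, Real.sinh_arsinh] at this
    exact (hd.trans_le this).ne'
  have hderiv : ∀ x ∈ Set.Ioo (arsinh d) b, HasDerivAt (fun y => -arcsin (d / sinh y))
      (d / √(sinh x ^ 2 - d ^ 2) * (cosh x / sinh x)) x :=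
    fun x hx => hasDerivAt_neg_arcsin_div_sinh hd (hsinh x hx.1)
  have hint : IntegrableOn (fun x => d / √(sinh x ^ 2 - d ^ 2) * (cosh x / sinh x))
      (Set.Ioc (arsinh d) b) := by
    refine intervalIntegral.integrableOn_deriv_of_nonneg hcont hderiv fun x hx => ?_
    have := hd.trans (hsinh x hx.1)
    have := Real.cosh_pos x
    positivity
  refine ⟨hint, ?_⟩
  rw [← intervalIntegral.integral_of_le hab,
    intervalIntegral.integral_eq_sub_of_hasDerivAt_of_le hab hcont hderiv
      ((intervalIntegrable_iff_integrableOn_Ioc_of_le hab).2 hint),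
    Real.sinh_arsinh, div_self hd.ne', Real.arcsin_one]
  ring

theorem integral_div_sqrt_sinh_sq_sub_sq_mem_Icc {d b : ℝ} (hd : 0 < d) (hb : d ≤ sinh b) :
    ∫ x in Set.Ioc (arsinh d) b, d / √(sinh x ^ 2 - d ^ 2) ∈
      Set.Icc (d / √(1 + d ^ 2) * (π / 2 - arcsin (d / sinh b)))
        (π / 2 - arcsin (d / sinh b)) := by
  obtain ⟨hint, heq⟩ := integrableOn_and_integral_mul_coth hd hb
  have hsinh : ∀ x ∈ Set.Ioc (arsinh d) b, d < sinh x := fun x hx => by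
    have := hx.1
    rwa [← Real.sinh_lt_sinh, Real.sinh_arsinh] at this
  have hle : ∀ x ∈ Set.Ioc (arsinh d) b, d / √(sinh x ^ 2 - d ^ 2) ≤
      d / √(sinh x ^ 2 - d ^ 2) * (cosh x / sinh x) := fun x hx =>
    le_mul_of_one_le_right (by positivity)
      ((one_le_div (hd.trans (hsinh x hx))).2 (Real.sinh_lt_cosh x).le)
  have hint' : IntegrableOn (fun x => d / √(sinh x ^ 2 - d ^ 2)) (Set.Ioc (arsinh d) b) := by
    refine Integrable.mono' hint (Measurable.aestronglyMeasurable (by fun_prop)) ?_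
    refine (ae_restrict_iff' measurableSet_Ioc).2 (Eventually.of_forall fun x hx => ?_)
    rw [Real.norm_of_nonneg (by positivity)]
    exact hle x hx
  rw [← heq]
  refine ⟨?_, setIntegral_mono_on hint' hint measurableSet_Ioc hle⟩
  rw [← integral_const_mul]
  refine setIntegral_mono_on (hint.const_mul _) hint' measurableSet_Ioc fun x hx => ?_
  have hs := hsinh x hx
  have hs0 := hd.trans hs
  have hcoth : d / √(1 + d ^ 2) * (cosh x / sinh x) ≤ 1 := by
    rw [div_mul_div_comm, div_le_one (by positivity)]
    refine le_of_sq_le_sq ?_ (by positivity)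
    rw [mul_pow, mul_pow, Real.sq_sqrt (by positivity), Real.cosh_sq]
    nlinarith
  calc d / √(1 + d ^ 2) * (d / √(sinh x ^ 2 - d ^ 2) * (cosh x / sinh x))
      = d / √(sinh x ^ 2 - d ^ 2) * (d / √(1 + d ^ 2) * (cosh x / sinh x)) := by ring
    _ ≤ d / √(sinh x ^ 2 - d ^ 2) := mul_le_of_le_one_right (by positivity) hcoth

theorem tendsto_sinh_mul_log_div_atTop :
    Tendsto (fun d : ℝ => sinh ((3 / 2) * log d) / d) atTop atTop := by
  have hexp : Tendsto (fun d : ℝ => (exp ((1 / 2) * log d) - 1) / 2) atTop atTop :=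
    (tendsto_atTop_add_const_right _ (-1) (Real.tendsto_exp_atTop.comp
      (Real.tendsto_log_atTop.const_mul_atTop (by norm_num)))).atTop_div_const (by norm_num)
  refine tendsto_atTop_mono' _ ?_ hexp
  filter_upwards [eventually_ge_atTop 1] with d hd
  have hd0 : 0 < d := by linarith
  have hlog := Real.log_nonneg hd
  have hsplit : exp ((3 / 2) * log d) = exp ((1 / 2) * log d) * d := by
    conv_rhs => rw [← Real.exp_log hd0, Real.log_exp, ← Real.exp_add]
    ring_nf
  have hneg : exp (-((3 / 2) * log d)) ≤ 1 := Real.exp_le_one_iff.2 (by linarith)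
  rw [le_div_iff₀ hd0, Real.sinh_eq, hsplit]
  linarith

theorem tendsto_div_sqrt_one_add_sq :
    Tendsto (fun d : ℝ => d / √(1 + d ^ 2)) atTop (nhds 1) := by
  have hinv : Tendsto (fun d : ℝ => (√(d⁻¹ ^ 2 + 1))⁻¹) atTop (nhds 1) := by
    have h : Continuous fun y : ℝ => (√(y ^ 2 + 1))⁻¹ :=
      Continuous.inv₀ (by fun_prop) fun y => by positivity
    simpa [Function.comp_def] using (h.tendsto 0).comp tendsto_inv_atTop_zero
  refine hinv.congr' ?_
  filter_upwards [eventually_gt_atTop 0] with d hd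
  rw [show d⁻¹ ^ 2 + 1 = (1 + d ^ 2) / d ^ 2 by field_simp, Real.sqrt_div' _ (sq_nonneg _),
    Real.sqrt_sq hd.le, inv_div]

theorem compact_catenoid_half_height_tendsto_pi_div_two :
    Filter.Tendsto
      (fun d : ℝ =>
        ∫ x in Set.Ioc (Real.arsinh d) ((3 / 2) * Real.log d),
          d / Real.sqrt (Real.sinh x ^ 2 - d ^ 2))
      Filter.atTop (nhds (Real.pi / 2)) := by
  have hupper : Tendsto (fun d : ℝ => π / 2 - arcsin (d / sinh ((3 / 2) * log d))) atTop
      (nhds (π / 2)) := by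
    have hzero : Tendsto (fun d : ℝ => d / sinh ((3 / 2) * log d)) atTop (nhds 0) := by
      simpa [Pi.inv_def] using tendsto_sinh_mul_log_div_atTop.inv_tendsto_atTop
    simpa using ((Real.continuous_arcsin.tendsto 0).comp hzero).const_sub (π / 2)
  have hlower := tendsto_div_sqrt_one_add_sq.mul hupper
  rw [one_mul] at hlower
  have hmem : ∀ᶠ d : ℝ in atTop, 0 < d ∧ d ≤ sinh ((3 / 2) * log d) := by
    filter_upwards [eventually_gt_atTop 0,
      tendsto_sinh_mul_log_div_atTop.eventually_ge_atTop 1] with d hd h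
    exact ⟨hd, (one_le_div hd).1 h⟩
  refine tendsto_of_tendsto_of_tendsto_of_le_of_le' hlower hupper ?_ ?_
  · filter_upwards [hmem] with d hd
    exact (integral_div_sqrt_sinh_sq_sub_sq_mem_Icc hd.1 hd.2).1
  · filter_upwards [hmem] with d hd
    exact (integral_div_sqrt_sinh_sq_sub_sq_mem_Icc hd.1 hd.2).2
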